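/- arXiv:2011.06924 — 3 statements merged into one kernel-verified Lean document; each statement's English description precedes it below -/
import Mathlib

section
/- Let (G, μ, U) be a fuzzy subgroup and C = C(G,μ,U) its cover monoid. Then C is an inverse monoid: for every p = (u,x) ∈ C there exists a unique q ∈ C with pqp = p and qpq = q, namely q = (u, x⁻¹). -/
/-- `(G, μ, U)` is a fuzzy subgroup: `U ⊆ [0,1]`, `μ : G → U` surjective,
`μ(xy) ≥ min (μ x) (μ y)` and `μ x⁻¹ = μ x`. -/
def IsFuzzySubgroup {G : Type*} [Group G] (μ : G → ℝ) (U : Set ℝ) : Prop :=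
  U ⊆ Set.Icc (0 : ℝ) 1 ∧ (∀ x, μ x ∈ U) ∧ (∀ u ∈ U, ∃ x, μ x = u) ∧
    (∀ x y, min (μ x) (μ y) ≤ μ (x * y)) ∧ (∀ x, μ x⁻¹ = μ x)

/-- Membership in the cover monoid `C(G,μ,U) = {(u,x) ∈ U × G : u ≤ μ x}`. -/
def inCover {G : Type*} [Group G] (μ : G → ℝ) (U : Set ℝ) (p : ℝ × G) : Prop :=
  p.1 ∈ U ∧ p.1 ≤ μ p.2

/-- The multiplication `(u,x)(v,y) = (min u v, xy)` of the cover monoid. -/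
def cmul {M : Type*} [Mul M] (p q : ℝ × M) : ℝ × M :=
  (min p.1 q.1, p.2 * q.2)

/-!
The multiplication of the cover monoid is componentwise, and so is the relation of being
generalized inverses. In a meet-semilattice each element is its own only generalized inverse,
since `u ⊓ v ⊓ u = u` says `u ≤ v` and `v ⊓ u ⊓ v = v` says `v ≤ u`; in a group the only one is
the group inverse. Hence `(u, x⁻¹)` is the only candidate, and it lies in the cover because `μ` is
inversion-invariant.
-/

/-- Generalized inverses in the sense of semigroup theory: `aba = a` and `bab = b`. The operation
is an explicit argument, so that the notion applies to `⊓`, to a group law and to the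
multiplication of a cover alike. -/
def IsGeneralizedInverse {α : Type*} (op : α → α → α) (a b : α) : Prop :=
  op (op a b) a = a ∧ op (op b a) b = b

/-- The carrier of the cover `C(G,μ,U)`, for `μ` with values in an arbitrary ordered type `L`;
`inCover` is membership in it for `L = ℝ`. -/
def cover {L G : Type*} [LE L] (μ : G → L) (U : Set L) : Set (L × G) :=
  {p | p.1 ∈ U ∧ p.1 ≤ μ p.2}

/-- The multiplication of the cover over an arbitrary meet-semilattice `L`, defined on all of
`L × G`; `cmul` is the case `L = ℝ`. -/
def coverMul {L G : Type*} [Min L] [Mul G] (p q : L × G) : L × G :=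
  (p.1 ⊓ q.1, p.2 * q.2)

theorem isGeneralizedInverse_inf_iff {L : Type*} [SemilatticeInf L] {u v : L} :
    IsGeneralizedInverse (· ⊓ ·) u v ↔ v = u := by
  have inf_inf_self_eq_iff (a b : L) : a ⊓ b ⊓ a = a ↔ a ≤ b := by
    rw [inf_right_comm, inf_idem, inf_eq_left]
  simp only [IsGeneralizedInverse, inf_inf_self_eq_iff]
  exact antisymm_iff.trans eq_comm

theorem isGeneralizedInverse_mul_iff {G : Type*} [Group G] {x y : G} :
    IsGeneralizedInverse (· * ·) x y ↔ y = x⁻¹ := by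
  simp only [IsGeneralizedInverse, mul_eq_right]
  rw [mul_eq_one_iff_eq_inv', mul_eq_one_iff_eq_inv, and_self]

theorem isGeneralizedInverse_coverMul_iff {L G : Type*} [Min L] [Mul G] {p q : L × G} :
    IsGeneralizedInverse coverMul p q ↔
      IsGeneralizedInverse (· ⊓ ·) p.1 q.1 ∧ IsGeneralizedInverse (· * ·) p.2 q.2 := by
  simp only [IsGeneralizedInverse, coverMul, Prod.ext_iff]
  exact and_and_and_comm

theorem isGeneralizedInverse_coverMul_iff_eq {L G : Type*} [SemilatticeInf L] [Group G]
    {p q : L × G} : IsGeneralizedInverse coverMul p q ↔ q = (p.1, p.2⁻¹) := by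
  rw [isGeneralizedInverse_coverMul_iff, isGeneralizedInverse_inf_iff,
    isGeneralizedInverse_mul_iff, Prod.ext_iff]

theorem mk_inv_mem_cover {L G : Type*} [LE L] [Inv G] {μ : G → L} {U : Set L}
    (hμ : ∀ x, μ x⁻¹ = μ x) {u : L} {x : G} (hp : (u, x) ∈ cover μ U) :
    (u, x⁻¹) ∈ cover μ U :=
  ⟨hp.1, hp.2.trans_eq (hμ x).symm⟩

theorem stmt2_general {L G : Type*} [SemilatticeInf L] [Group G] (μ : G → L) (U : Set L)
    (hμ : ∀ x, μ x⁻¹ = μ x) (u : L) (x : G) (hp : (u, x) ∈ cover μ U) :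
    (∃! q : L × G, q ∈ cover μ U ∧ IsGeneralizedInverse coverMul (u, x) q) ∧
      (u, x⁻¹) ∈ cover μ U ∧ IsGeneralizedInverse coverMul (u, x) (u, x⁻¹) := by
  have mem : (u, x⁻¹) ∈ cover μ U := mk_inv_mem_cover hμ hp
  have inverse : IsGeneralizedInverse coverMul (u, x) (u, x⁻¹) :=
    isGeneralizedInverse_coverMul_iff_eq.mpr rfl
  exact ⟨⟨_, ⟨mem, inverse⟩, fun _ hq ↦ isGeneralizedInverse_coverMul_iff_eq.mp hq.2⟩,
    mem, inverse⟩

/-- `C(G,μ,U)` is an inverse monoid: each `(u,x)` has a unique generalized inverse,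
namely `(u, x⁻¹)`. -/
theorem stmt2 {G : Type*} [Group G] (μ : G → ℝ) (U : Set ℝ)
    (h : IsFuzzySubgroup μ U) (u : ℝ) (x : G) (hp : inCover μ U (u, x)) :
    (∃! q : ℝ × G, inCover μ U q ∧
        cmul (cmul (u, x) q) (u, x) = (u, x) ∧ cmul (cmul q (u, x)) q = q) ∧
    inCover μ U (u, x⁻¹) ∧
    cmul (cmul (u, x) (u, x⁻¹)) (u, x) = (u, x) ∧
    cmul (cmul (u, x⁻¹) (u, x)) (u, x⁻¹) = (u, x⁻¹) :=
  stmt2_general μ U h.2.2.2.2 u x hp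
end

section
/- Let (G, μ, U) be a fuzzy subgroup and C = C(G,μ,U) its cover monoid. For (u,x), (v,y) ∈ C, there exists an idempotent e ∈ C with (u,x) = (v,y)·e (i.e. (u,x) lies below (v,y) in the natural partial order of the inverse monoid C) if and only if x = y and u ≤ v. -/
section CMul

variable {M : Type*} [MulOneClass M]

theorem cmul_self_eq_iff [IsLeftCancelMul M] {e : ℝ × M} : cmul e e = e ↔ e.2 = 1 :=
  calc
    cmul e e = e ↔ e.2 * e.2 = e.2 * 1 := by
      simp only [cmul, Prod.ext_iff, min_self, true_and, mul_one]
    _ ↔ e.2 = 1 := mul_right_inj e.2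

theorem cmul_mk_one_eq_iff {u v w : ℝ} {x y : M} :
    cmul (v, y) (w, 1) = (u, x) ↔ min v w = u ∧ y = x := by
  simp only [cmul, mul_one, Prod.mk.injEq]

theorem stmt4_general [IsLeftCancelMul M] {C : Set (ℝ × M)} {u : ℝ} (hu : (u, 1) ∈ C) (v : ℝ)
    (x y : M) : (∃ e ∈ C, cmul e e = e ∧ cmul (v, y) e = (u, x)) ↔ x = y ∧ u ≤ v := by
  constructor
  · rintro ⟨⟨w, z⟩, -, hidem, hmul⟩
    obtain rfl : z = 1 := cmul_self_eq_iff.mp hidem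
    obtain ⟨rfl, rfl⟩ := cmul_mk_one_eq_iff.mp hmul
    exact ⟨rfl, min_le_left v w⟩
  · rintro ⟨rfl, huv⟩
    exact ⟨(u, 1), hu, cmul_self_eq_iff.mpr rfl,
      cmul_mk_one_eq_iff.mpr ⟨min_eq_right huv, rfl⟩⟩

end CMul

namespace IsFuzzySubgroup

variable {G : Type*} [Group G] {μ : G → ℝ} {U : Set ℝ}

theorem le_map_one (h : IsFuzzySubgroup μ U) (x : G) : μ x ≤ μ 1 := by
  obtain ⟨-, -, -, min_le_map_mul, map_inv⟩ := h
  calc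
    μ x = min (μ x) (μ x⁻¹) := by rw [map_inv, min_self]
    _ ≤ μ (x * x⁻¹) := min_le_map_mul x x⁻¹
    _ = μ 1 := by rw [mul_inv_cancel]

theorem inCover_mk_one (h : IsFuzzySubgroup μ U) {u : ℝ} {x : G} (hux : inCover μ U (u, x)) :
    inCover μ U (u, 1) :=
  ⟨hux.1, hux.2.trans (h.le_map_one x)⟩

end IsFuzzySubgroup

/-- Natural partial order of `C(G,μ,U)`: `(u,x) ≤ (v,y)` iff `x = y` and `u ≤ v`. -/
theorem stmt4 {G : Type*} [Group G] (μ : G → ℝ) (U : Set ℝ)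
    (h : IsFuzzySubgroup μ U) (u v : ℝ) (x y : G)
    (hux : inCover μ U (u, x)) (hvy : inCover μ U (v, y)) :
    (∃ e : ℝ × G, inCover μ U e ∧ cmul e e = e ∧ cmul (v, y) e = (u, x)) ↔
      x = y ∧ u ≤ v :=
  stmt4_general (C := {p | inCover μ U p}) (h.inCover_mk_one hux) v x y
end

section
/- Let (G, μ, U) be a fuzzy subgroup and C = C(G,μ,U) its cover monoid. For (u,x), (v,y) ∈ C, there exists an idempotent e ∈ C with (u,x)·e = (v,y)·e (i.e. (u,x) and (v,y) are related by the least group congruence σ of the inverse monoid C) if and only if x = y. Moreover, for each x ∈ G the element (μ(x), x) is the greatest element of its σ-class: for every v with (v,x) ∈ C one has v ≤ μ(x). Hence C is an F-inverse monoid. -/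
section

variable {L M : Type*}

/-- The cover monoid of a map `μ` with values in `U`, as a subset of `L × M`, for truth values in an
arbitrary ordered type `L`. It is `inCover` when `L = ℝ` and `M` is a group. -/
def fuzzyCover [LE L] (μ : M → L) (U : Set L) : Set (L × M) :=
  {p | p.1 ∈ U ∧ p.1 ≤ μ p.2}

/-- The multiplication of the cover monoid, defined on all of `L × M`, with the minimum of truth
values replaced by the meet of `L`. It is `cmul` when `L = ℝ`. -/
def fuzzyCoverMul [Min L] [Mul M] (p q : L × M) : L × M :=
  (p.1 ⊓ q.1, p.2 * q.2)

/-- The relation `σ` on the cover monoid: `p` and `q` agree after right multiplication by an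
idempotent of the cover. In an inverse monoid this is the least group congruence. -/
def FuzzyCoverSigma [SemilatticeInf L] [Mul M] (μ : M → L) (U : Set L) (p q : L × M) : Prop :=
  ∃ e ∈ fuzzyCover μ U, fuzzyCoverMul e e = e ∧ fuzzyCoverMul p e = fuzzyCoverMul q e

theorem map_le_map_one_of_inf_le_map_mul {G : Type*} [Group G] [SemilatticeInf L] {μ : G → L}
    (hmul : ∀ x y, μ x ⊓ μ y ≤ μ (x * y)) (hinv : ∀ x, μ x⁻¹ = μ x) (x : G) : μ x ≤ μ 1 := by
  simpa only [hinv, inf_idem, mul_inv_cancel] using hmul x x⁻¹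

theorem mk_one_mem_fuzzyCover [Preorder L] [One M] {μ : M → L} {U : Set L}
    (hone : ∀ x, μ x ≤ μ 1) {u : L} {x : M} (hu : (u, x) ∈ fuzzyCover μ U) :
    (u, 1) ∈ fuzzyCover μ U :=
  ⟨hu.1, hu.2.trans (hone x)⟩

theorem inf_mk_mem_fuzzyCover [SemilatticeInf L] {μ : M → L} {U : Set L} (hU : InfClosed U)
    {u v : L} {x : M} (hu : (u, x) ∈ fuzzyCover μ U) (hv : v ∈ U) :
    (u ⊓ v, x) ∈ fuzzyCover μ U :=
  ⟨hU hu.1 hv, inf_le_left.trans hu.2⟩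

theorem isGreatest_mk_mem_fuzzyCover [Preorder L] {μ : M → L} {U : Set L} {x : M} (hx : μ x ∈ U) :
    IsGreatest {u | (u, x) ∈ fuzzyCover μ U} (μ x) :=
  ⟨⟨hx, le_rfl⟩, fun _ hu => hu.2⟩

theorem fuzzyCoverMul_mk_one_of_le [SemilatticeInf L] [MulOneClass M] {u w : L} (hwu : w ≤ u)
    (x : M) : fuzzyCoverMul (u, x) (w, 1) = (w, x) :=
  Prod.ext (inf_eq_right.2 hwu) (mul_one x)

theorem snd_eq_of_fuzzyCoverMul_right_eq [Min L] [Mul M] [IsRightCancelMul M] {p q e : L × M}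
    (h : fuzzyCoverMul p e = fuzzyCoverMul q e) : p.2 = q.2 :=
  mul_right_cancel (congrArg Prod.snd h)

theorem fuzzyCoverSigma_mk_mk_same [SemilatticeInf L] [MulOneClass M] {μ : M → L} {U : Set L}
    (hone : ∀ x, μ x ≤ μ 1) (hU : InfClosed U) {u v : L} {x : M}
    (hu : (u, x) ∈ fuzzyCover μ U) (hv : v ∈ U) : FuzzyCoverSigma μ U (u, x) (v, x) := by
  refine ⟨(u ⊓ v, 1), inf_mk_mem_fuzzyCover hU (mk_one_mem_fuzzyCover hone hu) hv,
    fuzzyCoverMul_mk_one_of_le le_rfl 1, ?_⟩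
  calc fuzzyCoverMul (u, x) (u ⊓ v, 1)
    _ = (u ⊓ v, x) := fuzzyCoverMul_mk_one_of_le inf_le_left x
    _ = fuzzyCoverMul (v, x) (u ⊓ v, 1) := (fuzzyCoverMul_mk_one_of_le inf_le_right x).symm

theorem fuzzyCoverSigma_mk_mk_iff [SemilatticeInf L] [MulOneClass M] [IsRightCancelMul M]
    {μ : M → L} {U : Set L} (hone : ∀ x, μ x ≤ μ 1) (hU : InfClosed U) {u v : L} {x y : M}
    (hu : (u, x) ∈ fuzzyCover μ U) (hv : v ∈ U) :
    FuzzyCoverSigma μ U (u, x) (v, y) ↔ x = y := by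
  constructor
  · rintro ⟨e, -, -, he⟩
    exact snd_eq_of_fuzzyCoverMul_right_eq he
  · rintro rfl
    exact fuzzyCoverSigma_mk_mk_same hone hU hu hv

theorem stmt5_general [SemilatticeInf L] [MulOneClass M] [IsRightCancelMul M] {μ : M → L}
    {U : Set L} (hone : ∀ x, μ x ≤ μ 1) (hU : InfClosed U) (hμ : ∀ x, μ x ∈ U) {u v : L} {x y : M}
    (hu : (u, x) ∈ fuzzyCover μ U) (hv : v ∈ U) :
    (FuzzyCoverSigma μ U (u, x) (v, y) ↔ x = y) ∧
      ∀ z, IsGreatest {w | (w, z) ∈ fuzzyCover μ U} (μ z) :=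
  ⟨fuzzyCoverSigma_mk_mk_iff hone hU hu hv, fun z => isGreatest_mk_mem_fuzzyCover (hμ z)⟩

end

/-- `σ`-relation in `C(G,μ,U)`: `(u,x) σ (v,y)` iff `x = y`; moreover `(μ x, x)` is
the greatest element of its `σ`-class, so `C(G,μ,U)` is an `F`-inverse monoid. -/
theorem stmt5 {G : Type*} [Group G] (μ : G → ℝ) (U : Set ℝ)
    (h : IsFuzzySubgroup μ U) (u v : ℝ) (x y : G)
    (hux : inCover μ U (u, x)) (hvy : inCover μ U (v, y)) :
    ((∃ e : ℝ × G, inCover μ U e ∧ cmul e e = e ∧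
        cmul (u, x) e = cmul (v, y) e) ↔ x = y) ∧
    (∀ z : G, inCover μ U (μ z, z) ∧ ∀ w : ℝ, inCover μ U (w, z) → w ≤ μ z) := by
  obtain ⟨-, hμ, -, hmul, hinv⟩ := h
  exact stmt5_general (map_le_map_one_of_inf_le_map_mul hmul hinv) (LinearOrder.infClosed U) hμ
    hux hvy.1
end
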